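/- (Theorem 1, soundness of input synthesis for semi-positive Datalog) Let P be a semi-positive Datalog program, J an interpretation, k ≥ 1, and J₀, J₁, …, J_k a k-step derivation family for (P,J). Let φ be a monotone ground formula. If J is rule-closed for P and the k-rewriting of φ (with respect to J and J_k) holds, then ⟦P⟧_{inp(P,J)} ⊨ φ. -/

import Mathlib

set_option autoImplicit false

namespace Datalog

universe u v w

variable {Preds : Type u} {Vars : Type v} {Vals : Type w} {ar : Preds → ℕ}

/-- A term is a variable or a value. -/
inductive Term (Vars : Type v) (Vals : Type w) : Type (max v w) where
  | var : Vars → Term Vars Vals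
  | val : Vals → Term Vars Vals

/-- An atom `p(t̄)` over terms. -/
structure Atom (Preds : Type u) (Vars : Type v) (Vals : Type w) (ar : Preds → ℕ) :
    Type (max u v w) where
  pred : Preds
  args : Fin (ar pred) → Term Vars Vals

/-- A literal: a positive or a negated atom. -/
inductive Lit (Preds : Type u) (Vars : Type v) (Vals : Type w) (ar : Preds → ℕ) :
    Type (max u v w) where
  | pos : Atom Preds Vars Vals ar → Lit Preds Vars Vals ar
  | neg : Atom Preds Vars Vals ar → Lit Preds Vars Vals ar

def Lit.atom : Lit Preds Vars Vals ar → Atom Preds Vars Vals ar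
  | .pos a => a
  | .neg a => a

def Lit.pred (l : Lit Preds Vars Vals ar) : Preds := l.atom.pred

def Lit.isPos : Lit Preds Vars Vals ar → Prop
  | .pos _ => True
  | .neg _ => False

def Lit.isNeg : Lit Preds Vars Vals ar → Prop
  | .pos _ => False
  | .neg _ => True

/-- A ground atom `p(v̄)`. -/
structure GAtom (Preds : Type u) (Vals : Type w) (ar : Preds → ℕ) : Type (max u w) where
  pred : Preds
  args : Fin (ar pred) → Vals

/-- An interpretation is a set of ground atoms. -/
abbrev Interp (Preds : Type u) (Vals : Type w) (ar : Preds → ℕ) :=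
  Set (GAtom Preds Vals ar)

def Atom.hasVar (a : Atom Preds Vars Vals ar) (x : Vars) : Prop :=
  ∃ i, a.args i = Term.var x

/-- A Datalog rule `a ← l₁,…,lₘ`: every variable in the head occurs in the body. -/
structure Rule (Preds : Type u) (Vars : Type v) (Vals : Type w) (ar : Preds → ℕ) :
    Type (max u v w) where
  head : Atom Preds Vars Vals ar
  body : List (Lit Preds Vars Vals ar)
  safe : ∀ x : Vars, head.hasVar x → ∃ l ∈ body, l.atom.hasVar x

/-- A Datalog program: a finite set (list) of rules. -/
abbrev Program (Preds : Type u) (Vars : Type v) (Vals : Type w) (ar : Preds → ℕ) :=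
  List (Rule Preds Vars Vals ar)

/-- Applying a substitution to a term. -/
def substT (σ : Vars → Vals) : Term Vars Vals → Vals
  | .var x => σ x
  | .val v => v

/-- `σ(a)`: grounding an atom by a substitution. -/
def Atom.ground (a : Atom Preds Vars Vals ar) (σ : Vars → Vals) : GAtom Preds Vals ar :=
  ⟨a.pred, fun i => substT σ (a.args i)⟩

/-- `A ⊢ σ(l)`. -/
def holds (A : Interp Preds Vals ar) (σ : Vars → Vals) : Lit Preds Vars Vals ar → Prop
  | .pos a => a.ground σ ∈ A
  | .neg a => a.ground σ ∉ A

/-- The consequence operator `T_P`. -/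
def T (P : Program Preds Vars Vals ar) (A : Interp Preds Vals ar) : Interp Preds Vals ar :=
  A ∪ { g | ∃ r ∈ P, ∃ σ : Vars → Vals, (∀ l ∈ r.body, holds A σ l) ∧ r.head.ground σ = g }

/-- `T^i_{P,I}`: iterates of the consequence operator. -/
def iter (P : Program Preds Vars Vals ar) (I : Interp Preds Vals ar) :
    ℕ → Interp Preds Vals ar
  | 0 => I
  | n + 1 => T P (iter P I n)

/-- The model `⟦P⟧_I = ⋃_{i≥0} T^i_{P,I}`. -/
def model (P : Program Preds Vars Vals ar) (I : Interp Preds Vals ar) :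
    Interp Preds Vals ar :=
  ⋃ n, iter P I n

/-- `p` is extensional for `P`: it occurs in no rule head. -/
def isEDB (P : Program Preds Vars Vals ar) (p : Preds) : Prop :=
  ∀ r ∈ P, r.head.pred ≠ p

/-- `p` is intensional for `P`: not extensional. -/
def isIDB (P : Program Preds Vars Vals ar) (p : Preds) : Prop := ¬ isEDB P p

/-- `inp(P, J)`: the extensional part of `J`. -/
def inp (P : Program Preds Vars Vals ar) (J : Interp Preds Vals ar) :
    Interp Preds Vals ar :=
  { a ∈ J | isEDB P a.pred }

/-- An input for `P` contains only atoms over edb predicates. -/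
def isInput (P : Program Preds Vars Vals ar) (I : Interp Preds Vals ar) : Prop :=
  ∀ a ∈ I, isEDB P a.pred

/-- `P` is semi-positive: negative body literals use only edb predicates. -/
def semiPositive (P : Program Preds Vars Vals ar) : Prop :=
  ∀ r ∈ P, ∀ a : Atom Preds Vars Vals ar, Lit.neg a ∈ r.body → isEDB P a.pred

/-- `J` is rule-closed for `P`. -/
def ruleClosed (P : Program Preds Vars Vals ar) (J : Interp Preds Vals ar) : Prop :=
  ∀ r ∈ P, ∀ σ : Vars → Vals, (∀ l ∈ r.body, holds J σ l) → r.head.ground σ ∈ J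

/-- Condition on a body literal in a k-step derivation family: a positive literal over an
idb predicate must have been derived at the previous level; otherwise (a literal over an
edb predicate) it must hold w.r.t. `J`. -/
def litStep (P : Program Preds Vars Vals ar) (J Fprev : Interp Preds Vals ar)
    (σ : Vars → Vals) : Lit Preds Vars Vals ar → Prop
  | .pos a => (isIDB P a.pred ∧ a.ground σ ∈ Fprev) ∨ (isEDB P a.pred ∧ a.ground σ ∈ J)
  | .neg a => a.ground σ ∉ J

/-- `F 0, F 1, …, F k` is a k-step derivation family for `(P, J)`. -/
def derivFamily (P : Program Preds Vars Vals ar) (J : Interp Preds Vals ar) (k : ℕ)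
    (F : ℕ → Interp Preds Vals ar) : Prop :=
  (∀ i ≤ k, ∀ a ∈ F i, isIDB P a.pred) ∧
  F 0 = ∅ ∧
  (∀ i, 1 ≤ i → i ≤ k → ∀ g : GAtom Preds Vals ar, isIDB P g.pred →
    (g ∈ F i ↔ ∃ r ∈ P, ∃ σ : Vars → Vals,
      r.head.ground σ = g ∧ ∀ l ∈ r.body, litStep P J (F (i - 1)) σ l))

/-- Monotone ground formulas: ground literals combined by ∧ and ∨. -/
inductive GForm (Preds : Type u) (Vals : Type w) (ar : Preds → ℕ) : Type (max u w) where
  | pos : GAtom Preds Vals ar → GForm Preds Vals ar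
  | neg : GAtom Preds Vals ar → GForm Preds Vals ar
  | conj : GForm Preds Vals ar → GForm Preds Vals ar → GForm Preds Vals ar
  | disj : GForm Preds Vals ar → GForm Preds Vals ar → GForm Preds Vals ar

/-- `A ⊨ φ`. -/
def sat (A : Interp Preds Vals ar) : GForm Preds Vals ar → Prop
  | .pos a => a ∈ A
  | .neg a => a ∉ A
  | .conj φ ψ => sat A φ ∧ sat A ψ
  | .disj φ ψ => sat A φ ∨ sat A ψ

/-- The k-rewriting of `φ` holds (w.r.t. `J` and the top level `Fk` of a derivation
family): positive idb literals are read in `Fk`, positive edb literals in `J`, and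
negative literals as non-membership in `J`. -/
def kRewrite (P : Program Preds Vars Vals ar) (J Fk : Interp Preds Vals ar) :
    GForm Preds Vals ar → Prop
  | .pos a => (isIDB P a.pred ∧ a ∈ Fk) ∨ (isEDB P a.pred ∧ a ∈ J)
  | .neg a => a ∉ J
  | .conj φ ψ => kRewrite P J Fk φ ∧ kRewrite P J Fk ψ
  | .disj φ ψ => kRewrite P J Fk φ ∨ kRewrite P J Fk ψ

/-- A positive property of interpretations. -/
def PositiveProp (φ : Interp Preds Vals ar → Prop) : Prop :=
  ∀ A A' : Interp Preds Vals ar, φ A → A ⊆ A' → φ A'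

/-- A negative property of interpretations. -/
def NegativeProp (φ : Interp Preds Vals ar → Prop) : Prop :=
  ∀ A A' : Interp Preds Vals ar, φ A → A' ⊆ A → φ A'

/-- `φ` contains only positive literals. -/
def onlyPos : GForm Preds Vals ar → Prop
  | .pos _ => True
  | .neg _ => False
  | .conj φ ψ => onlyPos φ ∧ onlyPos ψ
  | .disj φ ψ => onlyPos φ ∧ onlyPos ψ

/-- `φ` contains only negative literals. -/
def onlyNeg : GForm Preds Vals ar → Prop
  | .pos _ => False
  | .neg _ => True
  | .conj φ ψ => onlyNeg φ ∧ onlyNeg ψ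
  | .disj φ ψ => onlyNeg φ ∧ onlyNeg ψ

/-- The predicate `p` occurs in the program `P` (in a head or a body). -/
def occursIn (P : Program Preds Vars Vals ar) (p : Preds) : Prop :=
  ∃ r ∈ P, r.head.pred = p ∨ ∃ l ∈ r.body, l.pred = p

/-- All literals of `φ` use predicates occurring in `P`. -/
def formPredsIn (P : Program Preds Vars Vals ar) : GForm Preds Vals ar → Prop
  | .pos a => occursIn P a.pred
  | .neg a => occursIn P a.pred
  | .conj φ ψ => formPredsIn P φ ∧ formPredsIn P ψ
  | .disj φ ψ => formPredsIn P φ ∧ formPredsIn P ψ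

/-- `Ps 1, …, Ps n` is a stratification: whenever a predicate occurs in a positive
(resp. negative) body literal of a rule in stratum `i`, every rule with that head
predicate lies in a stratum `j ≤ i` (resp. `j < i`). -/
def stratifiedWith (Ps : ℕ → Program Preds Vars Vals ar) (n : ℕ) : Prop :=
  ∀ i, 1 ≤ i → i ≤ n → ∀ r ∈ Ps i, ∀ l ∈ r.body,
    ∀ j, 1 ≤ j → j ≤ n → ∀ r' ∈ Ps j, r'.head.pred = l.pred →
      (l.isPos → j ≤ i) ∧ (l.isNeg → j < i)

/-- The models `M₀ = I`, `Mᵢ = ⟦Pᵢ⟧_{M_{i-1}}` of the strata. -/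
def Msets (Ps : ℕ → Program Preds Vars Vals ar) (I : Interp Preds Vals ar) :
    ℕ → Interp Preds Vals ar
  | 0 => I
  | i + 1 => model (Ps (i + 1)) (Msets Ps I i)

/-!
The model `⟦P⟧_{inp(P,J)}` is squeezed between the derivation family and `J`: every level `Jᵢ` is
contained in the `i`-th iterate of `T_P` on `inp(P,J)`, and every iterate is contained in `J`.
Every iterate contains `inp(P,J)`, so it agrees with `J` on extensional atoms. Semi-positivity then
makes negative body literals mean the same in both, which together with rule-closedness gives the
upper inclusion. The lower inclusion depends on the upper one, because a negative literal read
in `J` is stronger than the same literal read in a subset of `J`. A monotone ground formula reads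
positive literals below the model and negative literals above it, so it passes to the model.
-/

section Iterates

variable {P : Program Preds Vars Vals ar} {I J : Interp Preds Vals ar}

theorem iter_monotone (P : Program Preds Vars Vals ar) (I : Interp Preds Vals ar) :
    Monotone (iter P I) :=
  monotone_nat_of_le_succ fun _ => Set.subset_union_left

theorem subset_iter (P : Program Preds Vars Vals ar) (I : Interp Preds Vals ar) (n : ℕ) :
    I ⊆ iter P I n :=
  iter_monotone P I n.zero_le

theorem iter_subset_model (P : Program Preds Vars Vals ar) (I : Interp Preds Vals ar) (n : ℕ) :
    iter P I n ⊆ model P I :=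
  Set.subset_iUnion (iter P I) n

theorem holds_of_inp_subset {A : Interp Preds Vals ar} {r : Rule Preds Vars Vals ar}
    {l : Lit Preds Vars Vals ar} {σ : Vars → Vals} (hP : semiPositive P)
    (hinp : inp P J ⊆ A) (hAJ : A ⊆ J) (hr : r ∈ P) (hl : l ∈ r.body) (h : holds A σ l) :
    holds J σ l := by
  cases l with
  | pos a => exact hAJ h
  | neg a => exact fun hmem => h (hinp ⟨hmem, hP r hr a hl⟩)

theorem T_subset_of_ruleClosed {A : Interp Preds Vals ar} (hP : semiPositive P)
    (hJ : ruleClosed P J) (hinp : inp P J ⊆ A) (hAJ : A ⊆ J) : T P A ⊆ J := by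
  rintro g (hg | ⟨r, hr, σ, hbody, rfl⟩)
  · exact hAJ hg
  · exact hJ r hr σ fun l hl => holds_of_inp_subset hP hinp hAJ hr hl (hbody l hl)

theorem iter_subset_of_ruleClosed (hP : semiPositive P) (hJ : ruleClosed P J)
    (hinp : inp P J ⊆ I) (hIJ : I ⊆ J) (n : ℕ) : iter P I n ⊆ J := by
  induction n with
  | zero => exact hIJ
  | succ n ih => exact T_subset_of_ruleClosed hP hJ (hinp.trans (subset_iter P I n)) ih

theorem model_subset_of_ruleClosed (hP : semiPositive P) (hJ : ruleClosed P J)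
    (hinp : inp P J ⊆ I) (hIJ : I ⊆ J) : model P I ⊆ J :=
  Set.iUnion_subset (iter_subset_of_ruleClosed hP hJ hinp hIJ)

end Iterates

section DerivationFamilies

variable {P : Program Preds Vars Vals ar} {I J : Interp Preds Vals ar}
  {F : ℕ → Interp Preds Vals ar}

/-- The one-step operator behind derivation families: the heads of the rule instances whose positive
intensional body literals hold in `A` and whose other body literals hold in `J`. Unlike `T`, it does
not retain the atoms of `A`. -/
def derivStep (P : Program Preds Vars Vals ar) (J A : Interp Preds Vals ar) :
    Interp Preds Vals ar :=
  { g | ∃ r ∈ P, ∃ σ : Vars → Vals, r.head.ground σ = g ∧ ∀ l ∈ r.body, litStep P J A σ l }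

theorem derivFamily.subset_derivStep {k n : ℕ} (hF : derivFamily P J k F) (hn : n < k) :
    F (n + 1) ⊆ derivStep P J (F n) := by
  obtain ⟨hidb, -, hstep⟩ := hF
  intro g hg
  exact (hstep (n + 1) n.succ_pos hn g (hidb (n + 1) hn g hg)).1 hg

theorem holds_of_litStep {A B : Interp Preds Vals ar} {l : Lit Preds Vars Vals ar}
    {σ : Vars → Vals} (hinp : inp P J ⊆ B) (hAB : A ⊆ B) (hBJ : B ⊆ J)
    (h : litStep P J A σ l) : holds B σ l := by
  cases l with
  | pos a =>
    obtain ⟨-, hA⟩ | ⟨hedb, hJ⟩ := h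
    · exact hAB hA
    · exact hinp ⟨hJ, hedb⟩
  | neg a => exact fun hB => h (hBJ hB)

theorem derivStep_subset_T {A B : Interp Preds Vals ar} (hinp : inp P J ⊆ B) (hAB : A ⊆ B)
    (hBJ : B ⊆ J) : derivStep P J A ⊆ T P B := by
  rintro g ⟨r, hr, σ, hhead, hbody⟩
  exact .inr ⟨r, hr, σ, fun l hl => holds_of_litStep hinp hAB hBJ (hbody l hl), hhead⟩

theorem subset_iter_of_subset_derivStep (hinp : inp P J ⊆ I) (hiter : ∀ n, iter P I n ⊆ J)
    (hzero : F 0 ⊆ I) {n : ℕ} (hstep : ∀ i < n, F (i + 1) ⊆ derivStep P J (F i)) :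
    F n ⊆ iter P I n := by
  induction n with
  | zero => exact hzero
  | succ n ih =>
    have hFn : F n ⊆ iter P I n := ih fun i hi => hstep i (hi.trans n.lt_succ_self)
    calc F (n + 1) ⊆ derivStep P J (F n) := hstep n n.lt_succ_self
      _ ⊆ T P (iter P I n) :=
        derivStep_subset_T (hinp.trans (subset_iter P I n)) hFn (hiter n)

theorem derivFamily.subset_model {k : ℕ} (hF : derivFamily P J k F) (hP : semiPositive P)
    (hJ : ruleClosed P J) (hinp : inp P J ⊆ I) (hIJ : I ⊆ J) : F k ⊆ model P I := by
  have hzero : F 0 ⊆ I := hF.2.1.trans_subset (Set.empty_subset I)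
  have hiter : F k ⊆ iter P I k :=
    subset_iter_of_subset_derivStep hinp (iter_subset_of_ruleClosed hP hJ hinp hIJ) hzero
      fun _ => hF.subset_derivStep
  exact hiter.trans (iter_subset_model P I k)

end DerivationFamilies

theorem sat_of_kRewrite {P : Program Preds Vars Vals ar} {J Fk M : Interp Preds Vals ar}
    (hinp : inp P J ⊆ M) (hFk : Fk ⊆ M) (hMJ : M ⊆ J) {φ : GForm Preds Vals ar}
    (hφ : kRewrite P J Fk φ) : sat M φ := by
  induction φ with
  | pos a =>
    obtain ⟨-, hmem⟩ | ⟨hedb, hmem⟩ := hφ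
    · exact hFk hmem
    · exact hinp ⟨hmem, hedb⟩
  | neg a => exact fun hmem => hφ (hMJ hmem)
  | conj φ ψ ihφ ihψ => exact hφ.imp ihφ ihψ
  | disj φ ψ ihφ ihψ => exact hφ.imp ihφ ihψ

/-- Theorem 1, soundness of input synthesis for semi-positive Datalog:
if `J` is rule-closed for `P` and the k-rewriting of `φ` holds, then
`⟦P⟧_{inp(P,J)} ⊨ φ`. -/
theorem statement10 (P : Program Preds Vars Vals ar) (hP : semiPositive P)
    (J : Interp Preds Vals ar) (k : ℕ) (hk : 1 ≤ k)
    (F : ℕ → Interp Preds Vals ar) (hF : derivFamily P J k F)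
    (φ : GForm Preds Vals ar)
    (hJ : ruleClosed P J) (hφ : kRewrite P J (F k) φ) :
    sat (model P (inp P J)) φ := by
  have hinpJ : inp P J ⊆ J := Set.sep_subset J _
  have hinp : inp P J ⊆ model P (inp P J) := iter_subset_model P (inp P J) 0
  have hfamily : F k ⊆ model P (inp P J) := hF.subset_model hP hJ subset_rfl hinpJ
  have hmodel : model P (inp P J) ⊆ J := model_subset_of_ruleClosed hP hJ subset_rfl hinpJ
  exact sat_of_kRewrite hinp hfamily hmodel hφ

end Datalog
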